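/- arXiv:1904.10369 — 9 statements merged into one kernel-verified Lean document; each statement's English description precedes it below -/
import Mathlib

section
/- Let Q ∈ ℝ^{n×n} be symmetric positive semi-definite, A ∈ ℝ^{m×n}, b ∈ ℝ^m, c ∈ ℝ^n, μ > 0, λ ∈ ℝ^m and ζ ∈ ℝ^n. Suppose (x*, y*, z*) is a KKT triple for (P)-(D), and suppose (x_r, y_r, z_r) ∈ ℝⁿ×ℝᵐ×ℝⁿ satisfies the proximal optimality conditions A x_r + μ(y_r − λ) = b, c + Q x_r − Aᵀ y_r − z_r + μ(x_r − ζ) = 0, x_r ≥ 0, z_r ≥ 0, and (x_r)ᵀ z_r = 0. Then ‖(x_r, y_r) − (x*, y*)‖₂ ≤ ‖(ζ, λ) − (x*, y*)‖₂, where the norm is the Euclidean norm on ℝ^{n+m}. -/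
open Matrix

/-!
The proximal step is the resolvent of a monotone operator. Call estimate minus solution the
displacement. For two proximal solutions, `μ` times the difference of their displacements is the
saddle operator `(x, y) ↦ (Q x - Aᵀ y, A x)` applied to the difference of the solutions, minus the
difference of the slacks `z`. Pairing it with the difference of the solutions, the skew blocks
`-Aᵀ` and `A` cancel, `Q` contributes a nonnegative term, and so do the slacks by complementarity.
Expanding the square of the difference of the estimates then gives firm nonexpansiveness. A KKT
triple is a proximal solution whose estimates are its own primal and dual components.
-/

section DotProduct

variable {R ι : Type*} [Fintype ι]

theorem dotProduct_self_nonneg [Ring R] [LinearOrder R] [IsOrderedRing R] (v : ι → R) :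
    0 ≤ v ⬝ᵥ v :=
  Finset.sum_nonneg fun i _ => mul_self_nonneg (v i)

theorem dotProduct_self_eq_add_sub [CommRing R] (w d : ι → R) :
    w ⬝ᵥ w = d ⬝ᵥ d + (w - d) ⬝ᵥ (w - d) + 2 * (d ⬝ᵥ (w - d)) := by
  simp only [dotProduct_sub, sub_dotProduct, dotProduct_comm w d]
  ring

theorem sub_dotProduct_sub_nonpos_of_complementary [Ring R] [PartialOrder R] [IsOrderedRing R]
    {x x' z z' : ι → R} (hx : 0 ≤ x) (hz : 0 ≤ z) (hxz : x ⬝ᵥ z = 0)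
    (hx' : 0 ≤ x') (hz' : 0 ≤ z') (hxz' : x' ⬝ᵥ z' = 0) :
    (x - x') ⬝ᵥ (z - z') ≤ 0 :=
  calc (x - x') ⬝ᵥ (z - z') = -(x ⬝ᵥ z' + x' ⬝ᵥ z) := by
        rw [sub_dotProduct, dotProduct_sub, dotProduct_sub, hxz, hxz']
        abel
    _ ≤ 0 := neg_nonpos.2 <| add_nonneg (dotProduct_nonneg_of_nonneg hx hz')
        (dotProduct_nonneg_of_nonneg hx' hz)

end DotProduct

section ProximalSolution

variable {R ι κ : Type*} [CommRing R] [Fintype ι] [Fintype κ]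

/-- First-order optimality conditions of the proximal method of multipliers sub-problem with
penalty `μ` and estimates `(ζ, lam)`; `z` is the multiplier of the constraint `0 ≤ x`. -/
structure IsProximalSolution [LE R] (Q : Matrix ι ι R) (A : Matrix κ ι R) (b : κ → R)
    (c : ι → R) (μ : R) (ζ : ι → R) (lam : κ → R) (x : ι → R) (y : κ → R) (z : ι → R) : Prop where
  primal_feasibility : A *ᵥ x + μ • (y - lam) = b
  stationarity : c + Q *ᵥ x - Aᵀ *ᵥ y - z + μ • (x - ζ) = 0
  nonneg : 0 ≤ x
  slack_nonneg : 0 ≤ z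
  complementary : x ⬝ᵥ z = 0

namespace IsProximalSolution

variable {Q : Matrix ι ι R} {A : Matrix κ ι R} {b : κ → R} {c : ι → R} {μ : R}
  {ζ ζ' x x' z z' : ι → R} {lam lam' y y' : κ → R}

section LE

variable [LE R]

theorem of_kkt (μ : R) (hstationary : c + Q *ᵥ x - Aᵀ *ᵥ y - z = 0) (hfeasible : A *ᵥ x = b)
    (hx : 0 ≤ x) (hz : 0 ≤ z) (hxz : x ⬝ᵥ z = 0) :
    IsProximalSolution Q A b c μ x y x y z where
  primal_feasibility := by rw [sub_self, smul_zero, add_zero, hfeasible]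
  stationarity := by rw [sub_self, smul_zero, add_zero, hstationary]
  nonneg := hx
  slack_nonneg := hz
  complementary := hxz

theorem smul_primal_displacement_sub (h : IsProximalSolution Q A b c μ ζ lam x y z)
    (h' : IsProximalSolution Q A b c μ ζ' lam' x' y' z') :
    μ • ((ζ - ζ') - (x - x')) = Q *ᵥ (x - x') - Aᵀ *ᵥ (y - y') - (z - z') := by
  have hdiff := congrArg₂ (· - ·) h'.stationarity h.stationarity
  rw [← sub_eq_zero, ← sub_self (0 : ι → R), ← hdiff]
  simp only [mulVec_sub, smul_sub]
  abel

theorem smul_dual_displacement_sub (h : IsProximalSolution Q A b c μ ζ lam x y z)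
    (h' : IsProximalSolution Q A b c μ ζ' lam' x' y' z') :
    μ • ((lam - lam') - (y - y')) = A *ᵥ (x - x') := by
  have hdiff := congrArg₂ (· - ·) h'.primal_feasibility h.primal_feasibility
  rw [← sub_eq_zero, ← sub_self b, ← hdiff]
  simp only [mulVec_sub, smul_sub]
  abel

end LE

variable [LinearOrder R] [IsStrictOrderedRing R]

theorem dotProduct_displacement_sub_nonneg (hQ : ∀ v, 0 ≤ v ⬝ᵥ Q *ᵥ v) (hμ : 0 < μ)
    (h : IsProximalSolution Q A b c μ ζ lam x y z)
    (h' : IsProximalSolution Q A b c μ ζ' lam' x' y' z') :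
    0 ≤ (x - x') ⬝ᵥ ((ζ - ζ') - (x - x')) + (y - y') ⬝ᵥ ((lam - lam') - (y - y')) := by
  refine nonneg_of_mul_nonneg_right ?_ hμ
  have hslack : (x - x') ⬝ᵥ (z - z') ≤ 0 :=
    sub_dotProduct_sub_nonpos_of_complementary h.nonneg h.slack_nonneg h.complementary
      h'.nonneg h'.slack_nonneg h'.complementary
  calc 0 ≤ (x - x') ⬝ᵥ Q *ᵥ (x - x') - (x - x') ⬝ᵥ (z - z') :=
        sub_nonneg.2 (hslack.trans (hQ _))
    _ = (x - x') ⬝ᵥ (Q *ᵥ (x - x') - Aᵀ *ᵥ (y - y') - (z - z')) +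
          (y - y') ⬝ᵥ A *ᵥ (x - x') := by
        rw [dotProduct_sub _ _ (z - z'), dotProduct_sub _ (Q *ᵥ _), dotProduct_transpose_mulVec]
        ring
    _ = μ * ((x - x') ⬝ᵥ ((ζ - ζ') - (x - x')) + (y - y') ⬝ᵥ ((lam - lam') - (y - y'))) := by
        rw [← h.smul_primal_displacement_sub h', ← h.smul_dual_displacement_sub h', dotProduct_smul,
          dotProduct_smul, smul_eq_mul, smul_eq_mul, mul_add]

theorem firmly_nonexpansive (hQ : ∀ v, 0 ≤ v ⬝ᵥ Q *ᵥ v) (hμ : 0 < μ)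
    (h : IsProximalSolution Q A b c μ ζ lam x y z)
    (h' : IsProximalSolution Q A b c μ ζ' lam' x' y' z') :
    ((x - x') ⬝ᵥ (x - x') + (y - y') ⬝ᵥ (y - y')) +
        (((ζ - ζ') - (x - x')) ⬝ᵥ ((ζ - ζ') - (x - x')) +
          ((lam - lam') - (y - y')) ⬝ᵥ ((lam - lam') - (y - y'))) ≤
      (ζ - ζ') ⬝ᵥ (ζ - ζ') + (lam - lam') ⬝ᵥ (lam - lam') := by
  have hmono := dotProduct_displacement_sub_nonneg hQ hμ h h'
  rw [dotProduct_self_eq_add_sub (ζ - ζ') (x - x'),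
    dotProduct_self_eq_add_sub (lam - lam') (y - y')]
  linarith

end IsProximalSolution

theorem pmm_proximal_nonexpansive_general [LinearOrder R] [IsStrictOrderedRing R]
    {Q : Matrix ι ι R} {A : Matrix κ ι R} {b : κ → R} {c : ι → R} {μ : R}
    {ζ ζ' x x' z z' : ι → R} {lam lam' y y' : κ → R}
    (hQ : ∀ v, 0 ≤ v ⬝ᵥ Q *ᵥ v) (hμ : 0 < μ)
    (h : IsProximalSolution Q A b c μ ζ lam x y z)
    (h' : IsProximalSolution Q A b c μ ζ' lam' x' y' z') :
    (x - x') ⬝ᵥ (x - x') + (y - y') ⬝ᵥ (y - y') ≤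
      (ζ - ζ') ⬝ᵥ (ζ - ζ') + (lam - lam') ⬝ᵥ (lam - lam') :=
  le_of_add_le_of_nonneg_left (h.firmly_nonexpansive hQ hμ h')
    (add_nonneg (dotProduct_self_nonneg _) (dotProduct_self_nonneg _))

end ProximalSolution

/-- Non-expansiveness of the PMM proximal step: the solution of the proximal
sub-problem is at least as close to a KKT point of (P)-(D) as the estimates. -/
theorem pmm_proximal_nonexpansive {n m : ℕ}
    (Q : Matrix (Fin n) (Fin n) ℝ) (hQ : Q.PosSemidef)
    (A : Matrix (Fin m) (Fin n) ℝ) (b : Fin m → ℝ) (c : Fin n → ℝ)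
    (μ : ℝ) (hμ : 0 < μ) (lam : Fin m → ℝ) (ζ : Fin n → ℝ)
    (xs : Fin n → ℝ) (ys : Fin m → ℝ) (zs : Fin n → ℝ)
    (hs1 : c + Q *ᵥ xs - Aᵀ *ᵥ ys - zs = 0)
    (hs2 : A *ᵥ xs = b)
    (hs3 : 0 ≤ xs) (hs4 : 0 ≤ zs) (hs5 : xs ⬝ᵥ zs = 0)
    (xr : Fin n → ℝ) (yr : Fin m → ℝ) (zr : Fin n → ℝ)
    (hr1 : A *ᵥ xr + μ • (yr - lam) = b)
    (hr2 : c + Q *ᵥ xr - Aᵀ *ᵥ yr - zr + μ • (xr - ζ) = 0)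
    (hr3 : 0 ≤ xr) (hr4 : 0 ≤ zr) (hr5 : xr ⬝ᵥ zr = 0) :
    Real.sqrt ((xr - xs) ⬝ᵥ (xr - xs) + (yr - ys) ⬝ᵥ (yr - ys)) ≤
      Real.sqrt ((ζ - xs) ⬝ᵥ (ζ - xs) + (lam - ys) ⬝ᵥ (lam - ys)) := by
  have hQ' : ∀ v, 0 ≤ v ⬝ᵥ Q *ᵥ v := by simpa only [star_trivial] using hQ.dotProduct_mulVec_nonneg
  exact Real.sqrt_le_sqrt <| pmm_proximal_nonexpansive_general hQ' hμ
    ⟨hr1, hr2, hr3, hr4, hr5⟩ (.of_kkt μ hs1 hs2 hs3 hs4 hs5)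
end

section
/- Let Q ∈ ℝ^{n×n} be symmetric positive semi-definite, A ∈ ℝ^{m×n}, and μ ≥ 0. If x̄, z̄ ∈ ℝⁿ and ȳ ∈ ℝᵐ satisfy A x̄ + μ ȳ = 0 and −Q x̄ + Aᵀ ȳ + z̄ − μ x̄ = 0, then x̄ᵀ z̄ = x̄ᵀ(Q + μI) x̄ + μ ȳᵀ ȳ ≥ 0. -/
open Matrix

/-!
Pairing the dual equation with `x` produces the cross term `⟨x, Aᴴ y⟩ = ⟨A x, y⟩`, and the primal
equation `A x = -μ y` turns it into `-μ ⟨y, y⟩`.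
-/

section RegularizedKKT

variable {R m n : Type*} [Fintype m] [Fintype n]

theorem star_dotProduct_conjTranspose_mulVec [NonUnitalSemiring R] [StarRing R]
    (A : Matrix m n R) (x : n → R) (y : m → R) :
    star x ⬝ᵥ (Aᴴ *ᵥ y) = star (A *ᵥ x) ⬝ᵥ y := by
  rw [star_mulVec, dotProduct_mulVec]

theorem star_dotProduct_conjTranspose_mulVec_of_mulVec_add_smul_eq_zero [CommRing R] [StarRing R]
    {A : Matrix m n R} {μ : R} (hμ : IsSelfAdjoint μ) {x : n → R} {y : m → R}
    (hprimal : A *ᵥ x + μ • y = 0) :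
    star x ⬝ᵥ (Aᴴ *ᵥ y) = -(μ * (star y ⬝ᵥ y)) := by
  rw [star_dotProduct_conjTranspose_mulVec, eq_neg_of_add_eq_zero_left hprimal, star_neg,
    star_smul, hμ.star_eq, neg_dotProduct, smul_dotProduct, smul_eq_mul]

theorem add_smul_one_mulVec [DecidableEq n] [CommSemiring R] (Q : Matrix n n R) (μ : R)
    (x : n → R) : (Q + μ • (1 : Matrix n n R)) *ᵥ x = Q *ᵥ x + μ • x := by
  rw [add_mulVec, smul_mulVec, one_mulVec]

theorem star_dotProduct_eq_of_regularized_kkt [DecidableEq n] [CommRing R] [StarRing R]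
    {Q : Matrix n n R} {A : Matrix m n R} {μ : R} (hμ : IsSelfAdjoint μ)
    {x z : n → R} {y : m → R} (hprimal : A *ᵥ x + μ • y = 0)
    (hdual : -(Q *ᵥ x) + Aᴴ *ᵥ y + z - μ • x = 0) :
    star x ⬝ᵥ z =
      star x ⬝ᵥ ((Q + μ • (1 : Matrix n n R)) *ᵥ x) + μ * (star y ⬝ᵥ y) := by
  have hz : z = (Q + μ • (1 : Matrix n n R)) *ᵥ x - Aᴴ *ᵥ y := by
    rw [add_smul_one_mulVec]
    linear_combination hdual
  rw [hz, dotProduct_sub,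
    star_dotProduct_conjTranspose_mulVec_of_mulVec_add_smul_eq_zero hμ hprimal, sub_neg_eq_add]

theorem star_dotProduct_add_smul_one_mulVec_nonneg [DecidableEq n] [CommRing R] [PartialOrder R]
    [StarRing R] [StarOrderedRing R] {Q : Matrix n n R} {μ : R} (hμ : 0 ≤ μ) {x : n → R}
    (hQ : 0 ≤ star x ⬝ᵥ (Q *ᵥ x)) :
    0 ≤ star x ⬝ᵥ ((Q + μ • (1 : Matrix n n R)) *ᵥ x) := by
  rw [add_smul_one_mulVec, dotProduct_add, dotProduct_smul, smul_eq_mul]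
  exact add_nonneg hQ (mul_nonneg hμ (dotProduct_star_self_nonneg x))

theorem regularized_kkt_orthogonality_general [DecidableEq n] [CommRing R] [PartialOrder R]
    [StarRing R] [StarOrderedRing R] {Q : Matrix n n R} {A : Matrix m n R} {μ : R} (hμ : 0 ≤ μ)
    {x z : n → R} {y : m → R} (hQ : 0 ≤ star x ⬝ᵥ (Q *ᵥ x))
    (hprimal : A *ᵥ x + μ • y = 0)
    (hdual : -(Q *ᵥ x) + Aᴴ *ᵥ y + z - μ • x = 0) :
    star x ⬝ᵥ z = star x ⬝ᵥ ((Q + μ • (1 : Matrix n n R)) *ᵥ x) + μ * (star y ⬝ᵥ y)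
      ∧ 0 ≤ star x ⬝ᵥ z := by
  have hpair := star_dotProduct_eq_of_regularized_kkt (.of_nonneg hμ) hprimal hdual
  refine ⟨hpair, hpair ▸ add_nonneg ?_ ?_⟩
  · exact star_dotProduct_add_smul_one_mulVec_nonneg hμ hQ
  · exact mul_nonneg hμ (dotProduct_star_self_nonneg y)

end RegularizedKKT

/-- Key orthogonality/sign property of the regularized homogeneous KKT system. -/
theorem regularized_kkt_orthogonality {n m : ℕ}
    (Q : Matrix (Fin n) (Fin n) ℝ) (hQ : Q.PosSemidef)
    (A : Matrix (Fin m) (Fin n) ℝ) (μ : ℝ) (hμ : 0 ≤ μ)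
    (xb zb : Fin n → ℝ) (yb : Fin m → ℝ)
    (h1 : A *ᵥ xb + μ • yb = 0)
    (h2 : -(Q *ᵥ xb) + Aᵀ *ᵥ yb + zb - μ • xb = 0) :
    xb ⬝ᵥ zb = xb ⬝ᵥ ((Q + μ • (1 : Matrix (Fin n) (Fin n) ℝ)) *ᵥ xb) + μ * (yb ⬝ᵥ yb)
      ∧ 0 ≤ xb ⬝ᵥ zb := by
  rw [← conjTranspose_eq_transpose_of_trivial] at h2
  simpa only [star_trivial] using
    regularized_kkt_orthogonality_general hμ (hQ.dotProduct_mulVec_nonneg xb) h1 h2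
end

section
/- Let n ≥ 1, μ > 0, C > 0, and 0 < σ_min ≤ 1. Let x, z ∈ ℝⁿ with xᵀz = nμ, let σ ∈ [σ_min, 1], and let Δx, Δz ∈ ℝⁿ satisfy zᵀΔx + xᵀΔz = (σ − 1) xᵀz and |ΔxᵀΔz| ≤ C² n⁴ μ. Then for every α with 0 ≤ α ≤ σ_min/(2 C² n³): (x + αΔx)ᵀ(z + αΔz) ≥ (1 − α(1 − σ_min/2)) xᵀz. -/
open Matrix

/-! Along the Newton direction the complementarity product is the quadratic
`(1 - α * (1 - σ)) * xᵀz + α² * ΔxᵀΔz`. Half of the first-order gain `α * σmin * xᵀz` provided by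
centering absorbs the second-order term as long as `α * |ΔxᵀΔz| ≤ σmin / 2 * xᵀz`. Since
`C² n⁴ μ = C² n³ * xᵀz`, this is the case for `α ≤ σmin / (2 C² n³)`. -/

section

variable {ι R : Type*} [Fintype ι]

theorem add_smul_dotProduct_add_smul [CommSemiring R] (x y u v : ι → R) (a : R) :
    (x + a • u) ⬝ᵥ (y + a • v) = x ⬝ᵥ y + a * (y ⬝ᵥ u + x ⬝ᵥ v) + a ^ 2 * (u ⬝ᵥ v) := by
  rw [dotProduct_comm y u]
  simp only [add_dotProduct, dotProduct_add, smul_dotProduct, dotProduct_smul, smul_eq_mul]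
  ring

theorem dotProduct_newton_step [CommRing R] {σ : R} {x z Δx Δz : ι → R}
    (hnewton : z ⬝ᵥ Δx + x ⬝ᵥ Δz = (σ - 1) * (x ⬝ᵥ z)) (α : R) :
    (x + α • Δx) ⬝ᵥ (z + α • Δz) = (1 - α * (1 - σ)) * (x ⬝ᵥ z) + α ^ 2 * (Δx ⬝ᵥ Δz) := by
  rw [add_smul_dotProduct_add_smul, hnewton]
  ring

theorem steplength_lower_bound_general [Field R] [LinearOrder R] [IsStrictOrderedRing R]
    {K σmin σ α : R} {x z Δx Δz : ι → R}
    (hxz : 0 ≤ x ⬝ᵥ z) (hσ : σmin ≤ σ)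
    (hnewton : z ⬝ᵥ Δx + x ⬝ᵥ Δz = (σ - 1) * (x ⬝ᵥ z))
    (hΔ : -(K * (x ⬝ᵥ z)) ≤ Δx ⬝ᵥ Δz) (hα : 0 ≤ α) (hαK : α * K ≤ σmin / 2) :
    (1 - α * (1 - σmin / 2)) * (x ⬝ᵥ z) ≤ (x + α • Δx) ⬝ᵥ (z + α • Δz) := by
  have second_order : -(σmin / 2 * (x ⬝ᵥ z)) ≤ α * (Δx ⬝ᵥ Δz) := calc
    -(σmin / 2 * (x ⬝ᵥ z)) ≤ -(α * K * (x ⬝ᵥ z)) := by gcongr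
    _ = α * -(K * (x ⬝ᵥ z)) := by ring
    _ ≤ α * (Δx ⬝ᵥ Δz) := by gcongr
  calc (1 - α * (1 - σmin / 2)) * (x ⬝ᵥ z)
      = (1 - α * (1 - σmin)) * (x ⬝ᵥ z) + α * -(σmin / 2 * (x ⬝ᵥ z)) := by ring
    _ ≤ (1 - α * (1 - σ)) * (x ⬝ᵥ z) + α * (α * (Δx ⬝ᵥ Δz)) := by gcongr
    _ = (x + α • Δx) ⬝ᵥ (z + α • Δz) := by rw [dotProduct_newton_step hnewton]; ring

end

/-- First step-length estimate of IP-PMM: the complementarity product does not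
decrease too fast along the Newton direction. -/
theorem steplength_lower_bound {n : ℕ} (hn : 1 ≤ n) (μ C σmin σ : ℝ)
    (hμ : 0 < μ) (hC : 0 < C) (hσmin : 0 < σmin) (hσmin1 : σmin ≤ 1)
    (x z Δx Δz : Fin n → ℝ)
    (hxz : x ⬝ᵥ z = n * μ)
    (hσ : σ ∈ Set.Icc σmin 1)
    (hnewton : z ⬝ᵥ Δx + x ⬝ᵥ Δz = (σ - 1) * (x ⬝ᵥ z))
    (hΔ : |Δx ⬝ᵥ Δz| ≤ C ^ 2 * n ^ 4 * μ) :
    ∀ α : ℝ, 0 ≤ α → α ≤ σmin / (2 * C ^ 2 * n ^ 3) →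
      (1 - α * (1 - σmin / 2)) * (x ⬝ᵥ z) ≤ (x + α • Δx) ⬝ᵥ (z + α • Δz) := by
  intro α hα hα_le
  have hK : C ^ 2 * n ^ 4 * μ = C ^ 2 * n ^ 3 * (x ⬝ᵥ z) := by rw [hxz]; ring
  have hαK : α * (C ^ 2 * n ^ 3) ≤ σmin / 2 := by
    rwa [← le_div_iff₀ (by positivity), div_div, ← mul_assoc]
  exact steplength_lower_bound_general (hxz ▸ by positivity) hσ.1 hnewton
    (neg_le_of_abs_le (hK ▸ hΔ)) hα hαK
end

section
/- Let n ≥ 1, μ > 0, C > 0. Let x, z ∈ ℝⁿ with xᵀz = nμ, let σ ∈ (0, 1/2], and let Δx, Δz ∈ ℝⁿ satisfy zᵀΔx + xᵀΔz = (σ − 1) xᵀz and |ΔxᵀΔz| ≤ C² n⁴ μ. Then for every α with 0 ≤ α ≤ 0.49/(C² n³): (x + αΔx)ᵀ(z + αΔz) ≤ (1 − 0.01 α) xᵀz. -/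
open Matrix

/-!
Along the Newton direction the complementarity product `s = xᵀz` becomes
`s - (1 - σ) α s + α² ΔxᵀΔz`. A step with `α ΔxᵀΔz ≤ (1 - σ - β) s` cannot let the second-order
term undo more than the part `1 - σ - β` of the linear decrease rate `1 - σ`, so the rate `β`
survives. The constants `σ ≤ 1/2` and `β = 0.01` leave the `0.49` of the step bound.
-/

section BilinearPairing

variable {R M N : Type*} [AddCommMonoid M] [AddCommMonoid N]

theorem bilin_add_smul_add_smul [CommSemiring R] [Module R M] [Module R N]
    (B : M →ₗ[R] N →ₗ[R] R) (x Δx : M) (z Δz : N) (α : R) :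
    B (x + α • Δx) (z + α • Δz) =
      B x z + α * (B Δx z + B x Δz) + α * (α * B Δx Δz) := by
  simp only [map_add, map_smul, LinearMap.add_apply, LinearMap.smul_apply, smul_eq_mul]
  ring

theorem bilin_add_smul_add_smul_le_of_newton [CommRing R] [PartialOrder R] [IsOrderedRing R]
    [Module R M] [Module R N] (B : M →ₗ[R] N →ₗ[R] R) {x Δx : M} {z Δz : N} {σ β κ α : R}
    (hxz : 0 ≤ B x z) (hnewton : B Δx z + B x Δz = (σ - 1) * B x z)
    (hΔ : B Δx Δz ≤ κ * B x z) (hα : 0 ≤ α) (hακ : α * κ ≤ 1 - σ - β) :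
    B (x + α • Δx) (z + α • Δz) ≤ (1 - β * α) * B x z := by
  have second_order : α * B Δx Δz ≤ (1 - σ - β) * B x z :=
    calc α * B Δx Δz ≤ α * (κ * B x z) := mul_le_mul_of_nonneg_left hΔ hα
      _ = α * κ * B x z := (mul_assoc _ _ _).symm
      _ ≤ (1 - σ - β) * B x z := mul_le_mul_of_nonneg_right hακ hxz
  calc B (x + α • Δx) (z + α • Δz)
      = B x z + α * ((σ - 1) * B x z) + α * (α * B Δx Δz) := by
        rw [bilin_add_smul_add_smul, hnewton]
    _ ≤ B x z + α * ((σ - 1) * B x z) + α * ((1 - σ - β) * B x z) := by gcongr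
    _ = (1 - β * α) * B x z := by ring

theorem steplength_decrease_bound_general [Field R] [LinearOrder R] [IsStrictOrderedRing R]
    [Module R M] [Module R N] (B : M →ₗ[R] N →ₗ[R] R) {ν μ C σ : R}
    (hν : 0 < ν) (hμ : 0 ≤ μ) (hC : C ≠ 0) (x Δx : M) (z Δz : N)
    (hxz : B x z = ν * μ) (hσ : σ ≤ 1 / 2)
    (hnewton : B Δx z + B x Δz = (σ - 1) * B x z)
    (hΔ : B Δx Δz ≤ C ^ 2 * ν ^ 4 * μ) {α : R} (hα : 0 ≤ α)
    (hα_le : α ≤ 0.49 / (C ^ 2 * ν ^ 3)) :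
    B (x + α • Δx) (z + α • Δz) ≤ (1 - 0.01 * α) * B x z := by
  have hxz_nonneg : 0 ≤ B x z := hxz ▸ mul_nonneg hν.le hμ
  have hΔ_le : B Δx Δz ≤ C ^ 2 * ν ^ 3 * B x z :=
    calc B Δx Δz ≤ C ^ 2 * ν ^ 4 * μ := hΔ
      _ = C ^ 2 * ν ^ 3 * B x z := by rw [hxz]; ring
  have hα_mul : α * (C ^ 2 * ν ^ 3) ≤ 1 - σ - 0.01 :=
    calc α * (C ^ 2 * ν ^ 3) ≤ 0.49 := (le_div_iff₀ (by positivity)).mp hα_le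
      _ = 1 - 1 / 2 - 0.01 := by norm_num
      _ ≤ 1 - σ - 0.01 := by gcongr
  exact bilin_add_smul_add_smul_le_of_newton B hxz_nonneg hnewton hΔ_le hα hα_mul

end BilinearPairing

/-- Third step-length estimate of IP-PMM: sufficient decrease of the barrier
parameter along the Newton direction. -/
theorem steplength_decrease_bound {n : ℕ} (hn : 1 ≤ n) (μ C σ : ℝ)
    (hμ : 0 < μ) (hC : 0 < C)
    (x z Δx Δz : Fin n → ℝ)
    (hxz : x ⬝ᵥ z = n * μ)
    (hσ : σ ∈ Set.Ioc (0 : ℝ) (1 / 2))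
    (hnewton : z ⬝ᵥ Δx + x ⬝ᵥ Δz = (σ - 1) * (x ⬝ᵥ z))
    (hΔ : |Δx ⬝ᵥ Δz| ≤ C ^ 2 * n ^ 4 * μ) :
    ∀ α : ℝ, 0 ≤ α → α ≤ 0.49 / (C ^ 2 * n ^ 3) →
      (x + α • Δx) ⬝ᵥ (z + α • Δz) ≤ (1 - 0.01 * α) * (x ⬝ᵥ z) := by
  intro α hα hα_le
  rw [dotProduct_comm z Δx] at hnewton
  exact steplength_decrease_bound_general (dotProductBilin ℝ ℝ) (Nat.cast_pos.mpr hn) hμ.le hC.ne'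
    x Δx z Δz hxz hσ.2 hnewton ((le_abs_self _).trans hΔ) hα hα_le
end

section
/- Let n ≥ 1, t ∈ [0,1], ξ > 0, and let x*, z*, x̃, z̃, x, z ∈ ℝⁿ satisfy: x ≥ 0, z ≥ 0, x* ≥ 0, z* ≥ 0, (x*)ᵀ z* = 0, x̃ ≥ ξ e, and z̃ ≥ ξ e (componentwise, where e is the all-ones vector). If ((1−t) x* + t x̃ − x)ᵀ ((1−t) z* + t z̃ − z) ≥ 0, then t ξ (∑_{i=1}^n x_i + ∑_{i=1}^n z_i) ≤ t(1−t) ((x*)ᵀ z̃ + x̃ᵀ z*) + t² x̃ᵀ z̃ + xᵀ z. -/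
open Matrix

/- Write `a = (1 - t) • xs + t • xt` and `b = (1 - t) • zs + t • zt`. Both vectors are bounded below
by `t * ξ`, so `a ⬝ᵥ z + x ⬝ᵥ b` dominates the left-hand side of the estimate. The sign of
`(a - x) ⬝ᵥ (b - z)` bounds it in turn by `a ⬝ᵥ b + x ⬝ᵥ z`, and complementarity removes the
`(1 - t) ^ 2` term from the expansion of `a ⬝ᵥ b`. -/

section

variable {ι R : Type*} [Fintype ι]

theorem mul_sum_le_dotProduct [Semiring R] [PartialOrder R] [IsOrderedRing R]
    {c : R} {u v : ι → R} (hu : ∀ i, c ≤ u i) (hv : 0 ≤ v) : c * ∑ i, v i ≤ u ⬝ᵥ v :=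
  calc c * ∑ i, v i = (fun _ => c) ⬝ᵥ v := Finset.mul_sum _ _ _
    _ ≤ u ⬝ᵥ v := dotProduct_le_dotProduct_of_nonneg_right hu hv

theorem sub_dotProduct_sub_nonneg_iff [NonUnitalNonAssocRing R] [PartialOrder R]
    [IsOrderedAddMonoid R] {a x b z : ι → R} :
    0 ≤ (a - x) ⬝ᵥ (b - z) ↔ a ⬝ᵥ z + x ⬝ᵥ b ≤ a ⬝ᵥ b + x ⬝ᵥ z := by
  have expansion : (a - x) ⬝ᵥ (b - z) = a ⬝ᵥ b + x ⬝ᵥ z - (a ⬝ᵥ z + x ⬝ᵥ b) := by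
    rw [sub_dotProduct, dotProduct_sub, dotProduct_sub]
    abel
  rw [expansion, sub_nonneg]

theorem smul_le_one_sub_smul_add_smul {M : Type*} [Ring R] [PartialOrder R] [IsOrderedAddMonoid R]
    [AddCommMonoid M] [PartialOrder M] [IsOrderedAddMonoid M] [Module R M] [PosSMulMono R M]
    {t : R} (ht : t ∈ Set.Icc 0 1) {u v w : M} (hu : 0 ≤ u) (hw : w ≤ v) :
    t • w ≤ (1 - t) • u + t • v :=
  calc t • w ≤ t • v := smul_le_smul_of_nonneg_left hw ht.1
    _ ≤ (1 - t) • u + t • v := le_add_of_nonneg_left (smul_nonneg (sub_nonneg.2 ht.2) hu)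

theorem one_sub_smul_add_smul_dotProduct [CommRing R] (t : R) (u v p q : ι → R) :
    ((1 - t) • u + t • v) ⬝ᵥ ((1 - t) • p + t • q) =
      (1 - t) ^ 2 * (u ⬝ᵥ p) + t * (1 - t) * (u ⬝ᵥ q + v ⬝ᵥ p) + t ^ 2 * (v ⬝ᵥ q) := by
  simp only [add_dotProduct, dotProduct_add, smul_dotProduct, dotProduct_smul, smul_eq_mul]
  ring

theorem iterate_boundedness_estimate_general [CommRing R] [PartialOrder R] [IsOrderedRing R]
    {t ξ : R} (ht : t ∈ Set.Icc 0 1) {xs zs xt zt x z : ι → R}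
    (hx : 0 ≤ x) (hz : 0 ≤ z) (hxs : 0 ≤ xs) (hzs : 0 ≤ zs) (hcomp : xs ⬝ᵥ zs = 0)
    (hxt : ∀ i, ξ ≤ xt i) (hzt : ∀ i, ξ ≤ zt i)
    (hkey : 0 ≤ ((1 - t) • xs + t • xt - x) ⬝ᵥ ((1 - t) • zs + t • zt - z)) :
    t * ξ * ((∑ i, x i) + ∑ i, z i) ≤
      t * (1 - t) * (xs ⬝ᵥ zt + xt ⬝ᵥ zs) + t ^ 2 * (xt ⬝ᵥ zt) + x ⬝ᵥ z := by
  set a := (1 - t) • xs + t • xt with ha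
  set b := (1 - t) • zs + t • zt with hb
  have le_a (i : ι) : t * ξ ≤ a i := smul_le_one_sub_smul_add_smul ht (hxs i) (hxt i)
  have le_b (i : ι) : t * ξ ≤ b i := smul_le_one_sub_smul_add_smul ht (hzs i) (hzt i)
  calc t * ξ * ((∑ i, x i) + ∑ i, z i)
      = t * ξ * ∑ i, z i + t * ξ * ∑ i, x i := by ring
    _ ≤ a ⬝ᵥ z + b ⬝ᵥ x :=
      add_le_add (mul_sum_le_dotProduct le_a hz) (mul_sum_le_dotProduct le_b hx)
    _ = a ⬝ᵥ z + x ⬝ᵥ b := by rw [dotProduct_comm b x]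
    _ ≤ a ⬝ᵥ b + x ⬝ᵥ z := sub_dotProduct_sub_nonneg_iff.1 hkey
    _ = t * (1 - t) * (xs ⬝ᵥ zt + xt ⬝ᵥ zs) + t ^ 2 * (xt ⬝ᵥ zt) + x ⬝ᵥ z := by
      rw [ha, hb, one_sub_smul_add_smul_dotProduct, hcomp, mul_zero, zero_add]

end

/-- Core estimate in the proof that the iterates of IP-PMM are bounded. -/
theorem iterate_boundedness_estimate {n : ℕ} (hn : 1 ≤ n) (t ξ : ℝ)
    (ht : t ∈ Set.Icc (0 : ℝ) 1) (hξ : 0 < ξ)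
    (xs zs xt zt x z : Fin n → ℝ)
    (hx : 0 ≤ x) (hz : 0 ≤ z) (hxs : 0 ≤ xs) (hzs : 0 ≤ zs)
    (hcomp : xs ⬝ᵥ zs = 0)
    (hxt : ∀ i, ξ ≤ xt i) (hzt : ∀ i, ξ ≤ zt i)
    (hkey : 0 ≤ ((1 - t) • xs + t • xt - x) ⬝ᵥ ((1 - t) • zs + t • zt - z)) :
    t * ξ * ((∑ i, x i) + ∑ i, z i) ≤
      t * (1 - t) * (xs ⬝ᵥ zt + xt ⬝ᵥ zs) + t ^ 2 * (xt ⬝ᵥ zt) + x ⬝ᵥ z :=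
  iterate_boundedness_estimate_general ht hx hz hxs hzs hcomp hxt hzt hkey
end

section
/- Let Q ∈ ℝ^{n×n} be symmetric positive semi-definite, μ > 0, A ∈ ℝ^{m×n} arbitrary, and let X, Z ∈ ℝ^{n×n} be diagonal matrices with strictly positive diagonal entries. Then the (2n+m)×(2n+m) block matrix [[−(Q + μI_n), Aᵀ, I_n], [A, μ I_m, 0], [Z, 0, X]] is nonsingular. -/
open Matrix

/-!
Eliminating the slack variables through the invertible block `X` leaves
`[[−(H + X⁻¹Z), Aᴴ], [A, E]]` with `H = Q + μI` and `E = μI`. Eliminating the multipliers through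
`E` in turn leaves `−(H + X⁻¹Z + AᴴE⁻¹A)`, the negative of a positive definite matrix.
-/

section

variable {l m n R K : Type*} [Fintype l] [Fintype m] [Fintype n]
  [DecidableEq l] [DecidableEq m] [DecidableEq n]

theorem isUnit_fromBlocks_fromRows_fromCols_iff [CommRing R]
    {P : Matrix n n R} {B : Matrix n m R} {C : Matrix m n R} {D : Matrix m m R}
    {Y : Matrix n l R} {Z : Matrix l n R} {X : Matrix l l R} (hX : IsUnit X) :
    IsUnit (fromBlocks (fromBlocks P B C D) (fromRows Y 0) (fromCols Z 0) X) ↔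
      IsUnit (fromBlocks (P - Y * X⁻¹ * Z) B C D) := by
  have := hX.invertible
  have schur_complement : fromBlocks P B C D - fromRows Y 0 * ⅟X * fromCols Z 0 =
      fromBlocks (P - Y * X⁻¹ * Z) B C D := by
    rw [sub_eq_iff_eq_add, invOf_eq_nonsing_inv, fromRows_mul, fromRows_mul_fromCols,
      fromBlocks_add]
    simp
  rw [isUnit_fromBlocks_iff_of_invertible₂₂, schur_complement]

variable [Field K] [PartialOrder K] [StarRing K]

theorem isUnit_fromBlocks_neg_of_posDef [AddLeftMono K]
    {H : Matrix n n K} {E : Matrix m m K} (hH : H.PosDef) (hE : E.PosDef)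
    (A : Matrix m n K) : IsUnit (fromBlocks (-H) Aᴴ A E) := by
  have := hE.isUnit.invertible
  have normal_posDef : (H + Aᴴ * E⁻¹ * A).PosDef :=
    hH.add_posSemidef (hE.inv.posSemidef.conjTranspose_mul_mul_same A)
  rw [isUnit_fromBlocks_iff_of_invertible₂₂, invOf_eq_nonsing_inv, ← neg_add']
  exact normal_posDef.isUnit.neg

theorem posSemidef_inv_diagonal_mul_diagonal [StarOrderedRing K]
    {x z : n → K} (hx : ∀ i, x i ≠ 0) (hxz : ∀ i, 0 ≤ (x i)⁻¹ * z i) :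
    ((diagonal x)⁻¹ * diagonal z).PosSemidef := by
  have inv_diagonal : (diagonal x)⁻¹ = diagonal fun i ↦ (x i)⁻¹ :=
    inv_eq_right_inv (by simp [hx])
  rw [inv_diagonal, diagonal_mul_diagonal]
  exact .diagonal hxz

theorem ippmm_newton_jacobian_nonsingular_general [AddLeftMono K]
    {H Z X : Matrix n n K} {E : Matrix m m K} (hH : H.PosDef) (hE : E.PosDef) (A : Matrix m n K)
    (hX : IsUnit X) (hXZ : (X⁻¹ * Z).PosSemidef) :
    (fromBlocks (fromBlocks (-H) Aᴴ A E) (fromRows 1 0) (fromCols Z 0) X).det ≠ 0 := by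
  rw [← isUnit_iff_ne_zero, ← isUnit_iff_isUnit_det, isUnit_fromBlocks_fromRows_fromCols_iff hX,
    Matrix.one_mul, ← neg_add']
  exact isUnit_fromBlocks_neg_of_posDef (hH.add_posSemidef hXZ) hE A

end

/-- The Jacobian of the IP-PMM Newton system,
`[[−(Q + μI), Aᵀ, I], [A, μI, 0], [Z, 0, X]]`, is nonsingular for any `A`. -/
theorem ippmm_newton_jacobian_nonsingular {n m : ℕ}
    (Q : Matrix (Fin n) (Fin n) ℝ) (hQ : Q.PosSemidef)
    (μ : ℝ) (hμ : 0 < μ)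
    (A : Matrix (Fin m) (Fin n) ℝ)
    (x z : Fin n → ℝ) (hx : ∀ i, 0 < x i) (hz : ∀ i, 0 < z i) :
    (Matrix.fromBlocks
        (Matrix.fromBlocks (-(Q + μ • (1 : Matrix (Fin n) (Fin n) ℝ))) Aᵀ
          A (μ • (1 : Matrix (Fin m) (Fin m) ℝ)))
        (Matrix.fromRows (1 : Matrix (Fin n) (Fin n) ℝ) (0 : Matrix (Fin m) (Fin n) ℝ))
        (Matrix.fromCols (Matrix.diagonal z) (0 : Matrix (Fin n) (Fin m) ℝ))
        (Matrix.diagonal x)).det ≠ 0 := by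
  have hXZ : ((diagonal x)⁻¹ * diagonal z).PosSemidef :=
    posSemidef_inv_diagonal_mul_diagonal (fun i ↦ (hx i).ne') fun i ↦
      (mul_pos (inv_pos.2 (hx i)) (hz i)).le
  exact ippmm_newton_jacobian_nonsingular_general (.posSemidef_add hQ (.smul .one hμ))
    (.smul .one hμ) A (PosDef.diagonal hx).isUnit hXZ
end

section
/- Let A ∈ ℝ^{m×n}, Q ∈ ℝ^{n×n} symmetric positive semi-definite, b ∈ ℝ^m, c ∈ ℝ^n, b̄ ∈ ℝ^m, c̄ ∈ ℝ^n, μ_0 > 0 and C_N > 0. Let {x_k}, {z_k} ⊂ ℝⁿ and {y_k} ⊂ ℝᵐ be bounded sequences with x_k ≥ 0 and z_k ≥ 0, let {λ_k} ⊂ ℝᵐ and {ζ_k} ⊂ ℝⁿ be sequences such that {‖y_k − λ_k‖₂} and {‖x_k − ζ_k‖₂} are bounded, and let μ_k := x_kᵀ z_k / n. Suppose μ_k → 0, ‖A x_k + μ_k (y_k − λ_k) − b − (μ_k/μ_0) b̄‖₂ ≤ C_N μ_k/μ_0 for all k, and ‖−Q x_k + Aᵀ y_k + z_k − μ_k (x_k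 − ζ_k) − c − (μ_k/μ_0) c̄‖₂ ≤ C_N μ_k/μ_0 for all k. Then there exists a KKT triple (x*, y*, z*) for (P)-(D), i.e. x*, z* ∈ ℝⁿ, y* ∈ ℝᵐ with A x* = b, c + Q x* − Aᵀ y* − z* = 0, x* ≥ 0, z* ≥ 0, and (x*)ᵀ z* = 0; moreover (x*, y*, z*) can be taken as a limit point of {(x_k, y_k, z_k)}. -/
open Matrix

/-!
The proximal terms and the shifts along `bbar` and `cbar` are bounded vectors scaled by `μ k` and
`μ k / μ0`, so they vanish in the limit together with the neighbourhood radius `CN * μ k / μ0`.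
Hence the residuals of the unregularized KKT system and the complementarity gap tend to zero. As
the KKT conditions are closed, they hold at every limit point of the iterates, and boundedness
provides one.
-/

section KKT

open Filter Topology

theorem tendsto_const_mulVec {R ι κ α : Type*} [NonUnitalNonAssocSemiring R] [TopologicalSpace R]
    [ContinuousAdd R] [ContinuousMul R] [Fintype ι] {l : Filter α} (B : Matrix κ ι R)
    {v : α → ι → R} {v₀ : ι → R} (hv : Tendsto v l (𝓝 v₀)) :
    Tendsto (fun k => B *ᵥ v k) l (𝓝 (B *ᵥ v₀)) :=
  ((continuous_const.matrix_mulVec continuous_id).tendsto v₀).comp hv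

variable {R ι κ α : Type*} [Ring R] [PartialOrder R] [Fintype ι] [Fintype κ]

/-- The KKT triples of the primal-dual pair (P)-(D). For `Q` symmetric but indefinite these are
its first-order stationary points, and for general `Q` the solutions of a mixed linear
complementarity problem. -/
structure IsKKTTriple (A : Matrix κ ι R) (Q : Matrix ι ι R) (b : κ → R) (c : ι → R)
    (x : ι → R) (y : κ → R) (z : ι → R) : Prop where
  primal_feasible : A *ᵥ x = b
  dual_feasible : c + Q *ᵥ x - Aᵀ *ᵥ y - z = 0
  primal_nonneg : 0 ≤ x
  dual_nonneg : 0 ≤ z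
  complementary : x ⬝ᵥ z = 0

theorem IsKKTTriple.of_tendsto [TopologicalSpace R] [IsTopologicalRing R] [OrderClosedTopology R]
    {l : Filter α} [l.NeBot] {A : Matrix κ ι R} {Q : Matrix ι ι R} {b : κ → R} {c : ι → R}
    {x z : α → ι → R} {y : α → κ → R} {xs zs : ι → R} {ys : κ → R}
    (hx : Tendsto x l (𝓝 xs)) (hy : Tendsto y l (𝓝 ys)) (hz : Tendsto z l (𝓝 zs))
    (hx_nonneg : ∀ᶠ k in l, 0 ≤ x k) (hz_nonneg : ∀ᶠ k in l, 0 ≤ z k)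
    (hprim : Tendsto (fun k => A *ᵥ x k) l (𝓝 b))
    (hdual : Tendsto (fun k => -(Q *ᵥ x k) + Aᵀ *ᵥ y k + z k) l (𝓝 c))
    (hgap : Tendsto (fun k => x k ⬝ᵥ z k) l (𝓝 0)) :
    IsKKTTriple A Q b c xs ys zs where
  primal_feasible := tendsto_nhds_unique (tendsto_const_mulVec A hx) hprim
  dual_feasible := by
    have hdual_lim : -(Q *ᵥ xs) + Aᵀ *ᵥ ys + zs = c :=
      tendsto_nhds_unique
        (((tendsto_const_mulVec Q hx).neg.add (tendsto_const_mulVec Aᵀ hy)).add hz) hdual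
    rw [← hdual_lim]
    abel
  primal_nonneg := ge_of_tendsto hx hx_nonneg
  dual_nonneg := ge_of_tendsto hz hz_nonneg
  complementary :=
    have hdot : Continuous fun p : (ι → R) × (ι → R) => p.1 ⬝ᵥ p.2 :=
      continuous_fst.dotProduct continuous_snd
    tendsto_nhds_unique ((hdot.tendsto (xs, zs)).comp (hx.prodMk_nhds hz)) hgap

end KKT

section IPPMM

open Filter Topology

theorem tendsto_of_norm_add_smul_sub_sub_smul_le {E α : Type*} [SeminormedAddCommGroup E]
    [NormedSpace ℝ E] {l : Filter α} {u w : α → E} {μ ε : α → ℝ} {a abar : E} {C : ℝ}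
    (hμ : Tendsto μ l (𝓝 0)) (hε : Tendsto ε l (𝓝 0))
    (hw : IsBoundedUnder (· ≤ ·) l fun k => ‖w k‖)
    (h : ∀ᶠ k in l, ‖u k + μ k • w k - a - ε k • abar‖ ≤ C * ε k) :
    Tendsto u l (𝓝 a) := by
  have hprox : Tendsto (fun k => μ k • w k) l (𝓝 0) :=
    NormedField.tendsto_zero_smul_of_tendsto_zero_of_bounded hμ hw
  have hshift : Tendsto (fun k => ε k • abar) l (𝓝 0) := by
    simpa only [zero_smul] using hε.smul_const abar
  have hresidual : Tendsto (fun k => u k + μ k • w k - a - ε k • abar) l (𝓝 0) :=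
    squeeze_zero_norm' h (by simpa only [mul_zero] using hε.const_mul C)
  have hsum := ((hresidual.sub hprox).add hshift).add_const a
  simp only [sub_zero, add_zero, zero_add] at hsum
  exact hsum.congr fun k => by abel

variable {ι κ : Type*} [Fintype ι] [Fintype κ]

/-- The Euclidean norm, written out because the norm instance on `ι → ℝ` is the sup norm. -/
noncomputable def euclideanNorm (v : ι → ℝ) : ℝ :=
  √(v ⬝ᵥ v)

theorem norm_le_euclideanNorm (v : ι → ℝ) : ‖v‖ ≤ euclideanNorm v :=
  (pi_norm_le_iff_of_nonneg (Real.sqrt_nonneg _)).2 fun i =>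
    Real.abs_le_sqrt <| (sq (v i)).trans_le <|
      Finset.single_le_sum (f := fun j => v j * v j) (fun j _ => mul_self_nonneg (v j))
        (Finset.mem_univ i)

theorem exists_norm_le_of_euclideanNorm_le {α : Type*} {v : α → ι → ℝ}
    (h : ∃ M, ∀ k, euclideanNorm (v k) ≤ M) : ∃ M, ∀ k, ‖v k‖ ≤ M :=
  h.imp fun _ hM k => (norm_le_euclideanNorm _).trans (hM k)

theorem isBounded_range_of_euclideanNorm_le {α : Type*} {v : α → ι → ℝ}
    (h : ∃ M, ∀ k, euclideanNorm (v k) ≤ M) : Bornology.IsBounded (Set.range v) :=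
  isBounded_iff_forall_norm_le.2 <|
    (exists_norm_le_of_euclideanNorm_le h).imp fun _ => Set.forall_mem_range.2

theorem ippmm_global_convergence_general [Nonempty ι] (A : Matrix κ ι ℝ) (Q : Matrix ι ι ℝ)
    (b bbar : κ → ℝ) (c cbar : ι → ℝ) (μ0 CN : ℝ) (hμ0 : μ0 ≠ 0)
    (x z : ℕ → ι → ℝ) (y lam : ℕ → κ → ℝ) (ζ : ℕ → ι → ℝ)
    (μ : ℕ → ℝ) (hμdef : ∀ k, μ k = (x k ⬝ᵥ z k) / Fintype.card ι)
    (hx0 : ∀ k, 0 ≤ x k) (hz0 : ∀ k, 0 ≤ z k)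
    (hxb : ∃ M, ∀ k, euclideanNorm (x k) ≤ M)
    (hyb : ∃ M, ∀ k, euclideanNorm (y k) ≤ M)
    (hzb : ∃ M, ∀ k, euclideanNorm (z k) ≤ M)
    (hylam : ∃ M, ∀ k, euclideanNorm (y k - lam k) ≤ M)
    (hxζ : ∃ M, ∀ k, euclideanNorm (x k - ζ k) ≤ M)
    (hμlim : Tendsto μ atTop (𝓝 0))
    (hprim : ∀ k, euclideanNorm
      (A *ᵥ x k + μ k • (y k - lam k) - b - (μ k / μ0) • bbar) ≤ CN * μ k / μ0)
    (hdual : ∀ k, euclideanNorm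
      (-(Q *ᵥ x k) + Aᵀ *ᵥ y k + z k - μ k • (x k - ζ k) - c - (μ k / μ0) • cbar) ≤
        CN * μ k / μ0) :
    ∃ xs ys zs, IsKKTTriple A Q b c xs ys zs ∧ ∃ φ : ℕ → ℕ, StrictMono φ ∧
      Tendsto (fun k => (x (φ k), y (φ k), z (φ k))) atTop (𝓝 (xs, ys, zs)) := by
  have hratio : Tendsto (fun k => μ k / μ0) atTop (𝓝 0) :=
    zero_div μ0 ▸ hμlim.div tendsto_const_nhds hμ0
  have hAx : Tendsto (fun k => A *ᵥ x k) atTop (𝓝 b) :=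
    tendsto_of_norm_add_smul_sub_sub_smul_le hμlim hratio
      (isBoundedUnder_of (exists_norm_le_of_euclideanNorm_le hylam))
      (.of_forall fun k => (norm_le_euclideanNorm _).trans (mul_div_assoc CN _ _ ▸ hprim k))
  have hdual_lim : Tendsto (fun k => -(Q *ᵥ x k) + Aᵀ *ᵥ y k + z k) atTop (𝓝 c) := by
    have hprox_bdd : IsBoundedUnder (· ≤ ·) atTop fun k => ‖-(x k - ζ k)‖ := by
      simpa only [norm_neg] using isBoundedUnder_of (exists_norm_le_of_euclideanNorm_le hxζ)
    refine tendsto_of_norm_add_smul_sub_sub_smul_le (C := CN) (abar := cbar) hμlim hratio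
      hprox_bdd (.of_forall fun k => ?_)
    simpa only [smul_neg, ← sub_eq_add_neg, mul_div_assoc] using
      (norm_le_euclideanNorm _).trans (hdual k)
  have hxz : Tendsto (fun k => x k ⬝ᵥ z k) atTop (𝓝 0) := by
    have hcard : (Fintype.card ι : ℝ) ≠ 0 := Nat.cast_ne_zero.2 Fintype.card_ne_zero
    have hscaled := hμlim.mul_const (Fintype.card ι : ℝ)
    rw [zero_mul] at hscaled
    exact hscaled.congr fun k => by rw [hμdef k, div_mul_cancel₀ _ hcard]
  have hbounded : Bornology.IsBounded (Set.range x ×ˢ Set.range y ×ˢ Set.range z) :=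
    (isBounded_range_of_euclideanNorm_le hxb).prod
      ((isBounded_range_of_euclideanNorm_le hyb).prod (isBounded_range_of_euclideanNorm_le hzb))
  obtain ⟨⟨xs, ys, zs⟩, -, φ, hφ, hlim⟩ := tendsto_subseq_of_bounded hbounded
    (x := fun k => (x k, y k, z k)) fun k => ⟨⟨k, rfl⟩, ⟨k, rfl⟩, ⟨k, rfl⟩⟩
  have hφ_top := hφ.tendsto_atTop
  exact ⟨xs, ys, zs,
    .of_tendsto hlim.fst_nhds hlim.snd_nhds.fst_nhds hlim.snd_nhds.snd_nhds
      (.of_forall fun k => hx0 (φ k)) (.of_forall fun k => hz0 (φ k))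
      (hAx.comp hφ_top) (hdual_lim.comp hφ_top) (hxz.comp hφ_top),
    φ, hφ, hlim⟩

end IPPMM

/-- Global convergence of IP-PMM / necessary condition for infeasibility:
if the iterates and proximal gaps stay bounded, the neighbourhood conditions
hold and `μ_k → 0`, then (P)-(D) possesses a KKT triple, obtained as a limit
point of the iterates. -/
theorem ippmm_global_convergence {n m : ℕ} (hn : 0 < n)
    (A : Matrix (Fin m) (Fin n) ℝ)
    (Q : Matrix (Fin n) (Fin n) ℝ) (hQ : Q.PosSemidef)
    (b bbar : Fin m → ℝ) (c cbar : Fin n → ℝ)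
    (μ0 CN : ℝ) (hμ0 : 0 < μ0) (hCN : 0 < CN)
    (x z : ℕ → Fin n → ℝ) (y lam : ℕ → Fin m → ℝ) (ζ : ℕ → Fin n → ℝ)
    (μ : ℕ → ℝ) (hμdef : ∀ k, μ k = (x k ⬝ᵥ z k) / n)
    (hx0 : ∀ k, 0 ≤ x k) (hz0 : ∀ k, 0 ≤ z k)
    (hxb : ∃ M, ∀ k, Real.sqrt (x k ⬝ᵥ x k) ≤ M)
    (hyb : ∃ M, ∀ k, Real.sqrt (y k ⬝ᵥ y k) ≤ M)
    (hzb : ∃ M, ∀ k, Real.sqrt (z k ⬝ᵥ z k) ≤ M)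
    (hylam : ∃ M, ∀ k, Real.sqrt ((y k - lam k) ⬝ᵥ (y k - lam k)) ≤ M)
    (hxζ : ∃ M, ∀ k, Real.sqrt ((x k - ζ k) ⬝ᵥ (x k - ζ k)) ≤ M)
    (hμlim : Filter.Tendsto μ Filter.atTop (nhds 0))
    (hprim : ∀ k,
      Real.sqrt ((A *ᵥ x k + μ k • (y k - lam k) - b - (μ k / μ0) • bbar) ⬝ᵥ
        (A *ᵥ x k + μ k • (y k - lam k) - b - (μ k / μ0) • bbar)) ≤ CN * μ k / μ0)
    (hdual : ∀ k,
      Real.sqrt ((-(Q *ᵥ x k) + Aᵀ *ᵥ y k + z k - μ k • (x k - ζ k) - c - (μ k / μ0) • cbar) ⬝ᵥ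
        (-(Q *ᵥ x k) + Aᵀ *ᵥ y k + z k - μ k • (x k - ζ k) - c - (μ k / μ0) • cbar)) ≤
        CN * μ k / μ0) :
    ∃ xs : Fin n → ℝ, ∃ ys : Fin m → ℝ, ∃ zs : Fin n → ℝ,
      A *ᵥ xs = b ∧ c + Q *ᵥ xs - Aᵀ *ᵥ ys - zs = 0 ∧
      0 ≤ xs ∧ 0 ≤ zs ∧ xs ⬝ᵥ zs = 0 ∧
      ∃ φ : ℕ → ℕ, StrictMono φ ∧
        Filter.Tendsto (fun k => (x (φ k), y (φ k), z (φ k))) Filter.atTop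
          (nhds (xs, ys, zs)) := by
  have : Nonempty (Fin n) := ⟨⟨0, hn⟩⟩
  obtain ⟨xs, ys, zs, hKKT, hlimit⟩ := ippmm_global_convergence_general A Q b bbar c cbar μ0 CN
    hμ0.ne' x z y lam ζ μ (by simpa only [Fintype.card_fin] using hμdef) hx0 hz0 hxb hyb hzb hylam
    hxζ hμlim hprim hdual
  exact ⟨xs, ys, zs, hKKT.primal_feasible, hKKT.dual_feasible, hKKT.primal_nonneg,
    hKKT.dual_nonneg, hKKT.complementary, hlimit⟩
end

section
/- Let A ∈ ℝ^{m×n}, b, b̄, b̃ ∈ ℝ^m, μ > 0, μ_0 > 0, σ ∈ ℝ, λ ∈ ℝ^m, x, Δx ∈ ℝⁿ, y, Δy ∈ ℝᵐ, and θ ∈ ℝ. Suppose: (i) A x + μ (y − λ) = b + (μ/μ_0)(b̄ + b̃), and (ii) A Δx + μ Δy = b + (σμ/μ_0) b̄ − A x − σμ (y − λ). Define μ(α) := μ + α(σ−1)μ + α²θ for α ∈ ℝ. Then for every α ∈ ℝ: A(x + αΔx) + μ(α)(y + αΔy − λ) − b − (μ(α)/μ_0) b̄ = (1−α)(μ/μ_0)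 b̃ + α²(σ−1)μ Δy + α²θ (y − λ + αΔy − b̄/μ_0). -/
open Matrix

/-!
The residual `A x + μ (y - λ) - b - (μ / μ₀) b̄` is a quadratic polynomial in `(μ, x, y)` whose only
second-order term is the product of `μ` and `y`. The second block of the Newton system says that
its differential in the direction `((σ - 1) μ, Δx, Δy)` is minus the residual, so a step of
length `α` in this direction multiplies the residual by `1 - α`, up to the second-order term
`α² (σ - 1) μ Δy`. The residual is affine in `μ` alone, so the remaining change `α² θ` of the
barrier parameter contributes exactly `α² θ` times the coefficient of `μ` at the new point.
-/

section PrimalResidual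

variable {R M N : Type*} [CommRing R] [AddCommGroup M] [Module R M] [AddCommGroup N] [Module R N]

/-- The residual of the regularized primal feasibility condition of IP-PMM, with a linear map `f`
in place of the constraint matrix. The vector `c` stands for the paper's `b̄ / μ₀`, so that no
division of scalars is needed. -/
def primalResidual (f : M →ₗ[R] N) (b c lam : N) (μ : R) (x : M) (y : N) : N :=
  f x + μ • (y - lam) - b - μ • c

/-- The differential of `primalResidual f b c lam` at `(μ, x, y)`, applied to the direction
`(ν, Δx, Δy)`. It depends on neither `b` nor `x`, in which the residual is affine. -/
def primalResidualDifferential (f : M →ₗ[R] N) (c lam : N) (μ : R) (y : N)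
    (ν : R) (Δx : M) (Δy : N) : N :=
  f Δx + μ • Δy + ν • (y - lam - c)

variable (f : M →ₗ[R] N) (b c lam : N) (μ : R) (x Δx : M) (y Δy : N)

theorem primalResidual_add_param (δ : R) :
    primalResidual f b c lam (μ + δ) x y =
      primalResidual f b c lam μ x y + δ • (y - lam - c) := by
  unfold primalResidual
  module

theorem primalResidual_add_smul (ν α : R) :
    primalResidual f b c lam (μ + α * ν) (x + α • Δx) (y + α • Δy) =
      primalResidual f b c lam μ x y + α • primalResidualDifferential f c lam μ y ν Δx Δy +
        (α ^ 2 * ν) • Δy := by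
  simp only [primalResidual, primalResidualDifferential, map_add, map_smul]
  module

theorem primalResidualDifferential_eq_neg_primalResidual_iff (σ : R) :
    primalResidualDifferential f c lam μ y ((σ - 1) * μ) Δx Δy = -primalResidual f b c lam μ x y ↔
      f Δx + μ • Δy = b + (σ * μ) • c - f x - (σ * μ) • (y - lam) := by
  unfold primalResidual primalResidualDifferential
  constructor <;> intro h <;> linear_combination (norm := module) h

variable {f b c lam μ x Δx y Δy}

theorem primalResidual_newton_step {ν : R}
    (hnewton : primalResidualDifferential f c lam μ y ν Δx Δy = -primalResidual f b c lam μ x y)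
    (α : R) :
    primalResidual f b c lam (μ + α * ν) (x + α • Δx) (y + α • Δy) =
      (1 - α) • primalResidual f b c lam μ x y + (α ^ 2 * ν) • Δy := by
  rw [primalResidual_add_smul, hnewton]
  module

theorem primal_infeasibility_recursion_general {r : N} {σ : R} (θ : R)
    (hfeas : f x + μ • (y - lam) = b + μ • (c + r))
    (hnewton : f Δx + μ • Δy = b + (σ * μ) • c - f x - (σ * μ) • (y - lam)) (α : R) :
    f (x + α • Δx) + (μ + α * (σ - 1) * μ + α ^ 2 * θ) • (y + α • Δy - lam)
        - b - (μ + α * (σ - 1) * μ + α ^ 2 * θ) • c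
      = (1 - α) • (μ • r) + (α ^ 2 * (σ - 1) * μ) • Δy
        + (α ^ 2 * θ) • (y - lam + α • Δy - c) := by
  have residual_eq : primalResidual f b c lam μ x y = μ • r := by
    unfold primalResidual
    linear_combination (norm := module) hfeas
  have differential_eq :=
    (primalResidualDifferential_eq_neg_primalResidual_iff f b c lam μ x Δx y Δy σ).mpr hnewton
  calc
    _ = primalResidual f b c lam (μ + α * ((σ - 1) * μ) + α ^ 2 * θ)
          (x + α • Δx) (y + α • Δy) := by rw [primalResidual, mul_assoc α]
    _ = (1 - α) • (μ • r) + (α ^ 2 * ((σ - 1) * μ)) • Δy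
          + (α ^ 2 * θ) • (y + α • Δy - lam - c) := by
      rw [primalResidual_add_param, primalResidual_newton_step differential_eq, residual_eq]
    _ = _ := by rw [mul_assoc (α ^ 2), add_sub_right_comm y]

end PrimalResidual

/-- Exact algebraic recursion for the scaled primal infeasibility along the
IP-PMM Newton direction. -/
theorem primal_infeasibility_recursion {n m : ℕ}
    (A : Matrix (Fin m) (Fin n) ℝ) (b bbar btil : Fin m → ℝ)
    (μ μ0 : ℝ) (hμ : 0 < μ) (hμ0 : 0 < μ0) (σ : ℝ)
    (lam : Fin m → ℝ) (x Δx : Fin n → ℝ) (y Δy : Fin m → ℝ) (θ : ℝ)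
    (h1 : A *ᵥ x + μ • (y - lam) = b + (μ / μ0) • (bbar + btil))
    (h2 : A *ᵥ Δx + μ • Δy =
      b + (σ * μ / μ0) • bbar - A *ᵥ x - (σ * μ) • (y - lam)) :
    ∀ α : ℝ,
      A *ᵥ (x + α • Δx) + (μ + α * (σ - 1) * μ + α ^ 2 * θ) • (y + α • Δy - lam)
          - b - ((μ + α * (σ - 1) * μ + α ^ 2 * θ) / μ0) • bbar
        = (1 - α) • ((μ / μ0) • btil) + (α ^ 2 * (σ - 1) * μ) • Δy
          + (α ^ 2 * θ) • (y - lam + α • Δy - (1 / μ0) • bbar) := by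
  simp only [div_eq_mul_inv, one_mul, mul_smul _ μ0⁻¹, smul_add μ0⁻¹] at h1 h2 ⊢
  exact primal_infeasibility_recursion_general (f := A.mulVecLin) θ h1 h2
end

section
/- Let A ∈ ℝ^{m×n}, Q ∈ ℝ^{n×n}, c, c̄, c̃ ∈ ℝⁿ, μ > 0, μ_0 > 0, σ ∈ ℝ, ζ ∈ ℝⁿ, x, Δx, z, Δz ∈ ℝⁿ, y, Δy ∈ ℝᵐ, and θ ∈ ℝ. Suppose: (i) −Q x + Aᵀ y + z − μ (x − ζ) = c + (μ/μ_0)(c̄ + c̃), and (ii) −(Q + μ I)Δx + Aᵀ Δy + Δz = c + (σμ/μ_0) c̄ + Q x − Aᵀ y − z + σμ (x − ζ). Define μ(α) := μ + α(σ−1)μ + α²θ for α ∈ ℝ. Then for every α ∈ ℝ: −Q(x + αΔx) + Aᵀ(y + αΔy) + (z + αΔz) − μ(α)(x + αΔx − ζ) − c − (μ(α)/μ_0) c̄ = (1−α)(μ/μ_0) c̃ − α²(σ−1)μ Δx − α²θ (x − ζ + αΔx + c̄/μ_0). -/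
open Matrix

/-!
For a fixed barrier parameter the dual residual is affine in `(x, y, z)`, and for a fixed point it
is affine in the barrier parameter. The dual block of the Newton system asks the linear part of the
residual at `μ` to cancel the residual at the target `σ * μ`. Along the step the first-order change
`α * (σ - 1) * μ` of the barrier parameter makes up for the difference between the residuals at `μ`
and `σ * μ`, so only the factor `1 - α` and terms of order `α ^ 2` are left.
-/

section DualResidual

variable {R E F : Type*} [CommRing R] [AddCommGroup E] [Module R E] [AddCommGroup F] [Module R F]

/-- The residual of the proximally regularized dual equation at `(x, y, z)` with barrier parameter
`μ`. The linear map `B` stands for `Aᵀ`, and the vector `b` for `c̄ / μ₀`, so that no division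
is needed. -/
def dualResidual (Q : E →ₗ[R] E) (B : F →ₗ[R] E) (c b ζ : E) (μ : R) (x : E) (y : F) (z : E) : E :=
  -Q x + B y + z - μ • (x - ζ) - c - μ • b

/-- The linear part of `dualResidual` in `(x, y, z)`, which is the left-hand side of the dual block
of the Newton system. -/
def dualNewtonMap (Q : E →ₗ[R] E) (B : F →ₗ[R] E) (μ : R) (Δx : E) (Δy : F) (Δz : E) : E :=
  -(Q + μ • (1 : Module.End R E)) Δx + B Δy + Δz

variable (Q : E →ₗ[R] E) (B : F →ₗ[R] E) (c b ζ : E)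

theorem dualResidual_add_smul (μ α : R) (x Δx z Δz : E) (y Δy : F) :
    dualResidual Q B c b ζ μ (x + α • Δx) (y + α • Δy) (z + α • Δz) =
      dualResidual Q B c b ζ μ x y z + α • dualNewtonMap Q B μ Δx Δy Δz := by
  simp only [dualResidual, dualNewtonMap, map_add, map_smul, LinearMap.add_apply,
    LinearMap.smul_apply, Module.End.one_apply]
  module

theorem dualResidual_add_barrier (μ δ : R) (x z : E) (y : F) :
    dualResidual Q B c b ζ (μ + δ) x y z =
      dualResidual Q B c b ζ μ x y z - δ • (x - ζ + b) := by
  simp only [dualResidual]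
  module

variable {Q B c b ζ}

theorem dualResidual_newton_step {μ σ : R} {x Δx z Δz : E} {y Δy : F}
    (newton : dualNewtonMap Q B μ Δx Δy Δz = -dualResidual Q B c b ζ (σ * μ) x y z) (θ α : R) :
    dualResidual Q B c b ζ (μ + α * (σ - 1) * μ + α ^ 2 * θ)
        (x + α • Δx) (y + α • Δy) (z + α • Δz) =
      (1 - α) • dualResidual Q B c b ζ μ x y z - (α ^ 2 * (σ - 1) * μ) • Δx
        - (α ^ 2 * θ) • (x - ζ + α • Δx + b) := by
  have target : dualResidual Q B c b ζ (σ * μ) x y z =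
      dualResidual Q B c b ζ μ x y z - ((σ - 1) * μ) • (x - ζ + b) := by
    rw [← dualResidual_add_barrier]
    congr 1
    ring
  rw [add_assoc μ, dualResidual_add_barrier, dualResidual_add_smul, newton, target]
  module

variable (Q B c b ζ)

/-- Here `b` and `t` stand for `c̄ / μ₀` and `c̃ / μ₀`. -/
theorem dual_infeasibility_recursion_general (t x Δx z Δz : E) (y Δy : F) (μ σ θ : R)
    (hres : -Q x + B y + z - μ • (x - ζ) = c + μ • (b + t))
    (hnewton : -(Q + μ • (1 : Module.End R E)) Δx + B Δy + Δz =
      c + (σ * μ) • b + Q x - B y - z + (σ * μ) • (x - ζ)) (α : R) :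
    -Q (x + α • Δx) + B (y + α • Δy) + (z + α • Δz)
        - (μ + α * (σ - 1) * μ + α ^ 2 * θ) • (x + α • Δx - ζ)
        - c - (μ + α * (σ - 1) * μ + α ^ 2 * θ) • b =
      (1 - α) • (μ • t) - (α ^ 2 * (σ - 1) * μ) • Δx
        - (α ^ 2 * θ) • (x - ζ + α • Δx + b) := by
  have residual : dualResidual Q B c b ζ μ x y z = μ • t := by
    rw [dualResidual, hres]
    module
  have newton : dualNewtonMap Q B μ Δx Δy Δz = -dualResidual Q B c b ζ (σ * μ) x y z := by
    rw [dualNewtonMap, hnewton, dualResidual]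
    module
  rw [← residual]
  exact dualResidual_newton_step newton θ α

end DualResidual

/-- Exact algebraic recursion for the scaled dual infeasibility along the
IP-PMM Newton direction. -/
theorem dual_infeasibility_recursion {n m : ℕ}
    (A : Matrix (Fin m) (Fin n) ℝ) (Q : Matrix (Fin n) (Fin n) ℝ)
    (c cbar ctil : Fin n → ℝ)
    (μ μ0 : ℝ) (hμ : 0 < μ) (hμ0 : 0 < μ0) (σ : ℝ)
    (ζ : Fin n → ℝ) (x Δx z Δz : Fin n → ℝ) (y Δy : Fin m → ℝ) (θ : ℝ)
    (h1 : -(Q *ᵥ x) + Aᵀ *ᵥ y + z - μ • (x - ζ) = c + (μ / μ0) • (cbar + ctil))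
    (h2 : -((Q + μ • (1 : Matrix (Fin n) (Fin n) ℝ)) *ᵥ Δx) + Aᵀ *ᵥ Δy + Δz =
      c + (σ * μ / μ0) • cbar + Q *ᵥ x - Aᵀ *ᵥ y - z + (σ * μ) • (x - ζ)) :
    ∀ α : ℝ,
      -(Q *ᵥ (x + α • Δx)) + Aᵀ *ᵥ (y + α • Δy) + (z + α • Δz)
          - (μ + α * (σ - 1) * μ + α ^ 2 * θ) • (x + α • Δx - ζ)
          - c - ((μ + α * (σ - 1) * μ + α ^ 2 * θ) / μ0) • cbar
        = (1 - α) • ((μ / μ0) • ctil) - (α ^ 2 * (σ - 1) * μ) • Δx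
          - (α ^ 2 * θ) • (x - ζ + α • Δx + (1 / μ0) • cbar) := by
  intro α
  simpa [smul_smul, div_eq_mul_inv, mulVec_transpose, add_vecMul, smul_vecMul] using
    dual_infeasibility_recursion_general Q.mulVecLin Aᵀ.mulVecLin c ((1 / μ0) • cbar) ζ
      ((1 / μ0) • ctil) x Δx z Δz y Δy μ σ θ
      (by simpa [smul_smul, div_eq_mul_inv, mulVec_transpose] using h1)
      (by simpa [smul_smul, div_eq_mul_inv, mulVec_transpose, add_mulVec, smul_mulVec] using h2) α
end
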